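/- Let A be an associative unital algebra over ℂ with a full comultiplication Δ, and assume there exist a faithful left integral φ and a faithful right integral on A. Then there exists a unique linear map S : A → A such that S((id ⊗ φ)(Δ(a)(1 ⊗ b))) = (id ⊗ φ)((1 ⊗ a)Δ(b)) for all a, b ∈ A (this determines S on all of A since A is spanned by elements of the form (id ⊗ φ)(Δ(a)(1 ⊗ b))), and this S satisfies S(ab) = S(b)S(a) for all a, b ∈ A. -/

import Mathlib

open TensorProduct

noncomputable section

variable {A : Type*} [Ring A] [Algebra ℂ A]

/-- The slice map `id ⊗ ω : A ⊗ A → A`. -/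
def sliceR (ω : A →ₗ[ℂ] ℂ) : A ⊗[ℂ] A →ₗ[ℂ] A :=
  (TensorProduct.rid ℂ A).toLinearMap ∘ₗ TensorProduct.map LinearMap.id ω

/-- The slice map `ω ⊗ id : A ⊗ A → A`. -/
def sliceL (ω : A →ₗ[ℂ] ℂ) : A ⊗[ℂ] A →ₗ[ℂ] A :=
  (TensorProduct.lid ℂ A).toLinearMap ∘ₗ TensorProduct.map ω LinearMap.id

/-- Coassociativity of a comultiplication `Δ : A → A ⊗ A`:
`(Δ ⊗ id) ∘ Δ = (id ⊗ Δ) ∘ Δ` (up to the associator). -/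
def IsCoassoc (Δ : A →ₐ[ℂ] A ⊗[ℂ] A) : Prop :=
  ∀ a : A,
    TensorProduct.assoc ℂ A A A (TensorProduct.map Δ.toLinearMap LinearMap.id (Δ a)) =
      TensorProduct.map LinearMap.id Δ.toLinearMap (Δ a)

/-- A left integral: a nonzero functional with `(id ⊗ φ)(Δ a) = φ(a)·1` for all `a`. -/
def IsLeftIntegral (Δ : A →ₐ[ℂ] A ⊗[ℂ] A) (φ : A →ₗ[ℂ] ℂ) : Prop :=
  φ ≠ 0 ∧ ∀ a : A, sliceR φ (Δ a) = φ a • (1 : A)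

/-- A right integral: a nonzero functional with `(ψ ⊗ id)(Δ a) = ψ(a)·1` for all `a`. -/
def IsRightIntegral (Δ : A →ₐ[ℂ] A ⊗[ℂ] A) (ψ : A →ₗ[ℂ] ℂ) : Prop :=
  ψ ≠ 0 ∧ ∀ a : A, sliceL ψ (Δ a) = ψ a • (1 : A)

/-- A faithful functional: the bilinear form `(a, b) ↦ ω(ab)` is non-degenerate. -/
def IsFaithful (ω : A →ₗ[ℂ] ℂ) : Prop :=
  (∀ b : A, (∀ a : A, ω (a * b) = 0) → b = 0) ∧
  (∀ b : A, (∀ a : A, ω (b * a) = 0) → b = 0)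

/-- The left leg of an element `x ∈ A ⊗ A`: the span of `{(id ⊗ ω)(x) : ω ∈ A*}`. -/
def leftLegOf (x : A ⊗[ℂ] A) : Submodule ℂ A :=
  Submodule.span ℂ {y : A | ∃ ω : A →ₗ[ℂ] ℂ, y = sliceR ω x}

/-- The right leg of an element `x ∈ A ⊗ A`: the span of `{(ω ⊗ id)(x) : ω ∈ A*}`. -/
def rightLegOf (x : A ⊗[ℂ] A) : Submodule ℂ A :=
  Submodule.span ℂ {y : A | ∃ ω : A →ₗ[ℂ] ℂ, y = sliceL ω x}

/-- The left leg of `Δ`: the span of `{(id ⊗ ω)(Δ a) : a ∈ A, ω ∈ A*}`. -/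
def leftLeg (Δ : A →ₐ[ℂ] A ⊗[ℂ] A) : Submodule ℂ A :=
  Submodule.span ℂ {y : A | ∃ (a : A) (ω : A →ₗ[ℂ] ℂ), y = sliceR ω (Δ a)}

/-- The right leg of `Δ`: the span of `{(ω ⊗ id)(Δ a) : a ∈ A, ω ∈ A*}`. -/
def rightLeg (Δ : A →ₐ[ℂ] A ⊗[ℂ] A) : Submodule ℂ A :=
  Submodule.span ℂ {y : A | ∃ (a : A) (ω : A →ₗ[ℂ] ℂ), y = sliceL ω (Δ a)}

/-- A comultiplication is full if both of its legs are all of `A`. -/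
def IsFull (Δ : A →ₐ[ℂ] A ⊗[ℂ] A) : Prop :=
  leftLeg Δ = ⊤ ∧ rightLeg Δ = ⊤

/-- The linear map `T₁` with `T₁ (a ⊗ b) = Δ(a) * (1 ⊗ b)`. -/
def T1 (Δ : A →ₐ[ℂ] A ⊗[ℂ] A) : A ⊗[ℂ] A →ₗ[ℂ] A ⊗[ℂ] A :=
  LinearMap.mul' ℂ (A ⊗[ℂ] A) ∘ₗ
    TensorProduct.map Δ.toLinearMap (TensorProduct.mk ℂ A A 1)

/-- The linear map `T₁'` with `T₁' (a ⊗ b) = Δ(a) * (b ⊗ 1)`. -/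
def T1' (Δ : A →ₐ[ℂ] A ⊗[ℂ] A) : A ⊗[ℂ] A →ₗ[ℂ] A ⊗[ℂ] A :=
  LinearMap.mul' ℂ (A ⊗[ℂ] A) ∘ₗ
    TensorProduct.map Δ.toLinearMap ((TensorProduct.mk ℂ A A).flip 1)

/-- The linear map `T₂` with `T₂ (a ⊗ b) = (a ⊗ 1) * Δ(b)`. -/
def T2 (Δ : A →ₐ[ℂ] A ⊗[ℂ] A) : A ⊗[ℂ] A →ₗ[ℂ] A ⊗[ℂ] A :=
  LinearMap.mul' ℂ (A ⊗[ℂ] A) ∘ₗ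
    TensorProduct.map ((TensorProduct.mk ℂ A A).flip 1) Δ.toLinearMap

/-- The linear map `T₂'` with `T₂' (a ⊗ b) = (1 ⊗ a) * Δ(b)`. -/
def T2' (Δ : A →ₐ[ℂ] A ⊗[ℂ] A) : A ⊗[ℂ] A →ₗ[ℂ] A ⊗[ℂ] A :=
  LinearMap.mul' ℂ (A ⊗[ℂ] A) ∘ₗ
    TensorProduct.map (TensorProduct.mk ℂ A A 1) Δ.toLinearMap

/-- A left cointegral: a nonzero element `h` with `Δ(a)(1 ⊗ h) = a ⊗ h` for all `a`. -/
def IsLeftCointegral (Δ : A →ₐ[ℂ] A ⊗[ℂ] A) (h : A) : Prop :=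
  h ≠ 0 ∧ ∀ a : A, Δ a * ((1 : A) ⊗ₜ[ℂ] h) = a ⊗ₜ[ℂ] h

/-- A right cointegral: a nonzero element `k` with `(k ⊗ 1)Δ(a) = k ⊗ a` for all `a`. -/
def IsRightCointegral (Δ : A →ₐ[ℂ] A ⊗[ℂ] A) (k : A) : Prop :=
  k ≠ 0 ∧ ∀ a : A, (k ⊗ₜ[ℂ] (1 : A)) * Δ a = k ⊗ₜ[ℂ] a

/-- `Δ₁₃(a) = (1 ⊗ σ)(Δ(a) ⊗ 1)`, viewed in `A ⊗ (A ⊗ A)`. -/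
def delta13 (Δ : A →ₐ[ℂ] A ⊗[ℂ] A) (a : A) : A ⊗[ℂ] (A ⊗[ℂ] A) :=
  TensorProduct.map LinearMap.id (TensorProduct.comm ℂ A A).toLinearMap
    (TensorProduct.assoc ℂ A A A (Δ a ⊗ₜ[ℂ] (1 : A)))

@[simp] theorem aux_sliceR_tmul (ω : A →ₗ[ℂ] ℂ) (x y : A) :
    sliceR ω (x ⊗ₜ[ℂ] y) = ω y • x := by simp [sliceR]

@[simp] theorem aux_sliceL_tmul (ω : A →ₗ[ℂ] ℂ) (x y : A) :
    sliceL ω (x ⊗ₜ[ℂ] y) = ω x • y := by simp [sliceL]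

@[simp] theorem aux_T1_tmul (Δ : A →ₐ[ℂ] A ⊗[ℂ] A) (x y : A) :
    T1 Δ (x ⊗ₜ[ℂ] y) = Δ x * ((1 : A) ⊗ₜ[ℂ] y) := by simp [T1]

theorem aux_sliceL_mul (ω : A →ₗ[ℂ] ℂ) (u : A ⊗[ℂ] A) (d : A) :
    sliceL ω (u * ((1 : A) ⊗ₜ[ℂ] d)) = sliceL ω u * d := by
  induction u with
  | zero => simp
  | tmul x y => simp
  | add u v hu hv => simp [add_mul, hu, hv]

theorem aux_mul_mul (u : A ⊗[ℂ] A) (d : A) :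
    LinearMap.mul' ℂ A (u * ((1 : A) ⊗ₜ[ℂ] d)) = LinearMap.mul' ℂ A u * d := by
  induction u with
  | zero => simp
  | tmul x y => simp [mul_assoc]
  | add u v hu hv => simp [add_mul, hu, hv]

theorem aux_T1_mul (Δ : A →ₐ[ℂ] A ⊗[ℂ] A) (u : A ⊗[ℂ] A) (d : A) :
    T1 Δ (u * ((1 : A) ⊗ₜ[ℂ] d)) = T1 Δ u * ((1 : A) ⊗ₜ[ℂ] d) := by
  induction u with
  | zero => simp
  | tmul x y => simp [mul_assoc]
  | add u v hu hv => simp [add_mul, hu, hv]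

/-- All right slices vanish implies the tensor vanishes. -/
theorem aux_eq_zero (z : A ⊗[ℂ] A) (h : ∀ f : A →ₗ[ℂ] ℂ, sliceR f z = 0) : z = 0 := by
  classical
  let B := Module.Basis.ofVectorSpace ℂ A
  apply (TensorProduct.equivFinsuppOfBasisRight (M := A) B).injective
  ext i
  rw [TensorProduct.equivFinsuppOfBasisRight_apply]
  simpa [sliceR, LinearMap.lTensor] using h (B.coord i)

theorem aux_slice_comm (f g : A →ₗ[ℂ] ℂ) (z : A ⊗[ℂ] A) :
    g (sliceR f z) = f (sliceL g z) := by
  induction z with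
  | zero => simp
  | tmul x y => simp [mul_comm]
  | add u v hu hv => simp [hu, hv]

theorem aux_T1_inj (Δ : A →ₐ[ℂ] A ⊗[ℂ] A)
    (ψ : A →ₗ[ℂ] ℂ) (hψ : IsRightIntegral Δ ψ) (hψf : IsFaithful ψ) :
    Function.Injective (T1 Δ) := by
  have key : ∀ (c : A) (z : A ⊗[ℂ] A),
      sliceL ψ (Δ c * T1 Δ z) = sliceL (ψ ∘ₗ LinearMap.mulLeft ℂ c) z := by
    intro c z
    induction z with
    | zero => simp
    | tmul x y =>
      rw [aux_T1_tmul, ← mul_assoc, aux_sliceL_mul, ← map_mul, hψ.2]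
      simp
    | add u v hu hv => simp [mul_add, hu, hv]
  rw [← LinearMap.ker_eq_bot, LinearMap.ker_eq_bot']
  intro z hz
  apply aux_eq_zero
  intro f
  apply hψf.1
  intro c
  have h1 := aux_slice_comm f (ψ ∘ₗ LinearMap.mulLeft ℂ c) z
  rw [← key, hz] at h1
  simpa using h1

/-- Sends a fourfold tensor to its legs one and three, applying φ to the product of the others. -/
def auxW (φ : A →ₗ[ℂ] ℂ) : (A ⊗[ℂ] A) ⊗[ℂ] (A ⊗[ℂ] A) →ₗ[ℂ] A ⊗[ℂ] A :=
  (TensorProduct.rid ℂ (A ⊗[ℂ] A)).toLinearMap ∘ₗ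
    TensorProduct.map LinearMap.id (φ ∘ₗ LinearMap.mul' ℂ A) ∘ₗ
      (TensorProduct.tensorTensorTensorComm ℂ A A A A).toLinearMap

@[simp] theorem auxW_tmul (φ : A →ₗ[ℂ] ℂ) (x x' y y' : A) :
    auxW φ ((x ⊗ₜ[ℂ] x') ⊗ₜ[ℂ] (y ⊗ₜ[ℂ] y')) = φ (x' * y') • (x ⊗ₜ[ℂ] y) := by
  simp [auxW]

theorem aux_ind2 {M : Type*} [AddCommGroup M] [Module ℂ M]
    (F G : (A ⊗[ℂ] A) ⊗[ℂ] (A ⊗[ℂ] A) →ₗ[ℂ] M)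
    (h : ∀ x x' y y' : A, F ((x ⊗ₜ[ℂ] x') ⊗ₜ[ℂ] (y ⊗ₜ[ℂ] y')) =
      G ((x ⊗ₜ[ℂ] x') ⊗ₜ[ℂ] (y ⊗ₜ[ℂ] y'))) (u v : A ⊗[ℂ] A) :
    F (u ⊗ₜ[ℂ] v) = G (u ⊗ₜ[ℂ] v) := by
  have : F = G := by
    apply TensorProduct.ext_fourfold'
    exact h
  rw [this]

theorem aux_mul_W (φ : A →ₗ[ℂ] ℂ) (u v : A ⊗[ℂ] A) :
    LinearMap.mul' ℂ A (auxW φ (u ⊗ₜ[ℂ] v)) = sliceR φ (u * v) := by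
  have := aux_ind2 (LinearMap.mul' ℂ A ∘ₗ auxW φ)
    (sliceR φ ∘ₗ LinearMap.mul' ℂ (A ⊗[ℂ] A)) (by intros; simp) u v
  simpa using this

theorem aux_sliceL_W (φ ε : A →ₗ[ℂ] ℂ) (u v : A ⊗[ℂ] A) :
    sliceL ε (auxW φ (u ⊗ₜ[ℂ] v)) = sliceR φ (((1 : A) ⊗ₜ[ℂ] sliceL ε u) * v) := by
  induction u with
  | zero => simp
  | add u u' hu hu' => simp only [TensorProduct.add_tmul, map_add, hu, hu', TensorProduct.tmul_add,
      add_mul]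
  | tmul x x' =>
    induction v with
    | zero => simp
    | add v v' hv hv' => simp only [TensorProduct.tmul_add, map_add, hv, hv', mul_add]
    | tmul y y' => simp [smul_smul, mul_comm]

theorem aux_T1_W1 (Δ : A →ₐ[ℂ] A ⊗[ℂ] A) (φ : A →ₗ[ℂ] ℂ) (u v : A ⊗[ℂ] A) :
    T1 Δ (auxW φ (u ⊗ₜ[ℂ] v)) =
      TensorProduct.map LinearMap.id (sliceR φ)
        (TensorProduct.assoc ℂ A A A (TensorProduct.map Δ.toLinearMap LinearMap.id u) *
          ((1 : A) ⊗ₜ[ℂ] v)) := by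
  induction u with
  | zero => simp
  | add u u' hu hu' => simp only [TensorProduct.add_tmul, map_add, hu, hu', add_mul]
  | tmul x x' =>
    induction v with
    | zero => simp
    | add v v' hv hv' => simp only [TensorProduct.tmul_add, map_add, hv, hv', mul_add]
    | tmul y y' =>
      simp only [auxW_tmul, map_smul, aux_T1_tmul, TensorProduct.map_tmul, LinearMap.id_coe, id_eq,
        AlgHom.toLinearMap_apply]
      induction Δ x with
      | zero => simp
      | add w w' hw hw' => simp only [add_mul, smul_add, hw, hw', TensorProduct.add_tmul, map_add]
      | tmul p q => simp

theorem aux_T1_W2 (Δ : A →ₐ[ℂ] A ⊗[ℂ] A) (φ : A →ₗ[ℂ] ℂ) (hφ : IsLeftIntegral Δ φ)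
    (u : A ⊗[ℂ] A) (b : A) :
      TensorProduct.map LinearMap.id (sliceR φ)
        (TensorProduct.map LinearMap.id Δ.toLinearMap u * ((1 : A) ⊗ₜ[ℂ] Δ b)) =
      sliceR φ (u * ((1 : A) ⊗ₜ[ℂ] b)) ⊗ₜ[ℂ] (1 : A) := by
  induction u with
  | zero => simp
  | add u u' hu hu' => simp only [TensorProduct.add_tmul, map_add, hu, hu', add_mul]
  | tmul x x' =>
    simp only [TensorProduct.map_tmul, LinearMap.id_coe, id_eq, AlgHom.toLinearMap_apply,
      Algebra.TensorProduct.tmul_mul_tmul, mul_one, ← map_mul, hφ.2, aux_sliceR_tmul,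
      TensorProduct.tmul_smul, TensorProduct.smul_tmul']

theorem aux_T1_W (Δ : A →ₐ[ℂ] A ⊗[ℂ] A) (hΔ : IsCoassoc Δ) (φ : A →ₗ[ℂ] ℂ)
    (hφ : IsLeftIntegral Δ φ) (a b : A) :
    T1 Δ (auxW φ (Δ a ⊗ₜ[ℂ] Δ b)) =
      sliceR φ (Δ a * ((1 : A) ⊗ₜ[ℂ] b)) ⊗ₜ[ℂ] (1 : A) := by
  rw [aux_T1_W1, hΔ, aux_T1_W2 Δ φ hφ]

theorem aux_span (Δ : A →ₐ[ℂ] A ⊗[ℂ] A) (hfull : IsFull Δ)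
    (φ : A →ₗ[ℂ] ℂ) (hφf : IsFaithful φ) :
    Submodule.span ℂ {y : A | ∃ a b : A, y = sliceR φ (Δ a * ((1 : A) ⊗ₜ[ℂ] b))} = ⊤ := by
  by_contra hne
  obtain ⟨f, hf0, hf⟩ := Submodule.exists_le_ker_of_lt_top _ (lt_top_iff_ne_top.2 hne)
  apply hf0
  have h1 : ∀ a, sliceL f (Δ a) = 0 := by
    intro a
    apply hφf.2
    intro b
    rw [← aux_sliceL_mul, ← aux_slice_comm]
    exact hf (Submodule.subset_span ⟨a, b, rfl⟩)
  have h2 : leftLeg Δ ≤ LinearMap.ker f := by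
    apply Submodule.span_le.2
    rintro y ⟨a, ω, rfl⟩
    simp [aux_slice_comm, h1]
  rw [hfull.1] at h2
  ext x
  exact h2 (Submodule.mem_top (x := x))

theorem aux_T1_surj (Δ : A →ₐ[ℂ] A ⊗[ℂ] A) (hΔ : IsCoassoc Δ) (hfull : IsFull Δ)
    (φ : A →ₗ[ℂ] ℂ) (hφ : IsLeftIntegral Δ φ) (hφf : IsFaithful φ) :
    Function.Surjective (T1 Δ) := by
  have h1 : ∀ c : A, c ⊗ₜ[ℂ] (1 : A) ∈ LinearMap.range (T1 Δ) := by
    intro c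
    have hc : c ∈ Submodule.span ℂ
        {y : A | ∃ a b : A, y = sliceR φ (Δ a * ((1 : A) ⊗ₜ[ℂ] b))} := by
      rw [aux_span Δ hfull φ hφf]; trivial
    induction hc using Submodule.span_induction with
    | mem x hx =>
      obtain ⟨a, b, rfl⟩ := hx
      exact ⟨_, aux_T1_W Δ hΔ φ hφ a b⟩
    | zero => simp
    | add x y _ _ hx hy => rw [TensorProduct.add_tmul]; exact add_mem hx hy
    | smul r x _ hx => rw [← TensorProduct.smul_tmul']; exact Submodule.smul_mem _ r hx
  intro z
  change z ∈ LinearMap.range (T1 Δ)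
  induction z with
  | zero => exact zero_mem _
  | add u v hu hv => exact add_mem hu hv
  | tmul c d =>
    obtain ⟨w, hw⟩ := h1 c
    exact ⟨w * ((1 : A) ⊗ₜ[ℂ] d), by rw [aux_T1_mul, hw]; simp⟩

/-- Applies D to legs one and three and multiplies by the product of the other legs. -/
def auxQ (D : A ⊗[ℂ] A →ₗ[ℂ] A) : (A ⊗[ℂ] A) ⊗[ℂ] (A ⊗[ℂ] A) →ₗ[ℂ] A :=
  LinearMap.mul' ℂ A ∘ₗ TensorProduct.map D (LinearMap.mul' ℂ A) ∘ₗ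
      (TensorProduct.tensorTensorTensorComm ℂ A A A A).toLinearMap

@[simp] theorem auxQ_tmul (D : A ⊗[ℂ] A →ₗ[ℂ] A) (x x' y y' : A) :
    auxQ D ((x ⊗ₜ[ℂ] x') ⊗ₜ[ℂ] (y ⊗ₜ[ℂ] y')) = D (x ⊗ₜ[ℂ] y) * (x' * y') := by
  simp [auxQ]

theorem auxQ_right (D : A ⊗[ℂ] A →ₗ[ℂ] A) (u v : A ⊗[ℂ] A) (c : A) :
    auxQ D (u ⊗ₜ[ℂ] (v * ((1 : A) ⊗ₜ[ℂ] c))) = auxQ D (u ⊗ₜ[ℂ] v) * c := by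
  induction u with
  | zero => simp
  | add u u' hu hu' => simp only [TensorProduct.add_tmul, map_add, hu, hu', add_mul]
  | tmul x x' =>
    induction v with
    | zero => simp
    | add v v' hv hv' => simp only [TensorProduct.tmul_add, map_add, hv, hv', add_mul]
    | tmul y y' => simp [mul_assoc]

theorem auxQ_left (D : A ⊗[ℂ] A →ₗ[ℂ] A) (u : A ⊗[ℂ] A) (y c : A) :
    auxQ D ((u * ((1 : A) ⊗ₜ[ℂ] c)) ⊗ₜ[ℂ] (y ⊗ₜ[ℂ] (1 : A))) =
      auxQ D (u ⊗ₜ[ℂ] (y ⊗ₜ[ℂ] c)) := by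
  induction u with
  | zero => simp
  | add u u' hu hu' => simp only [TensorProduct.add_tmul, map_add, hu, hu', add_mul]
  | tmul x x' => simp

theorem aux_cancel (Δ : A →ₐ[ℂ] A ⊗[ℂ] A) (hs : Function.Surjective (T1 Δ))
    (D D' : A ⊗[ℂ] A →ₗ[ℂ] A)
    (h : ∀ a b : A, auxQ D (Δ a ⊗ₜ[ℂ] Δ b) = auxQ D' (Δ a ⊗ₜ[ℂ] Δ b)) (x y : A) :
    D (x ⊗ₜ[ℂ] y) = D' (x ⊗ₜ[ℂ] y) := by
  have h1 : ∀ (a : A) (v : A ⊗[ℂ] A), auxQ D (Δ a ⊗ₜ[ℂ] v) = auxQ D' (Δ a ⊗ₜ[ℂ] v) := by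
    intro a v
    obtain ⟨z, rfl⟩ := hs v
    induction z with
    | zero => simp
    | add u u' hu hu' => simp only [TensorProduct.tmul_add, map_add, hu, hu']
    | tmul b c => rw [aux_T1_tmul, auxQ_right, auxQ_right, h]
  have h2 : ∀ u : A ⊗[ℂ] A,
      auxQ D (u ⊗ₜ[ℂ] (y ⊗ₜ[ℂ] (1 : A))) = auxQ D' (u ⊗ₜ[ℂ] (y ⊗ₜ[ℂ] (1 : A))) := by
    intro u
    obtain ⟨z, rfl⟩ := hs u
    induction z with
    | zero => simp
    | add u u' hu hu' => simp only [TensorProduct.add_tmul, map_add, hu, hu']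
    | tmul b c => rw [aux_T1_tmul, auxQ_left, auxQ_left, h1]
  simpa using h2 (x ⊗ₜ[ℂ] (1 : A))

/-- The counit is multiplicative. -/
theorem aux_counit_mul (Δ : A →ₐ[ℂ] A ⊗[ℂ] A) (hs : Function.Surjective (T1 Δ))
    (ε : A →ₗ[ℂ] ℂ) (hone : (1 : A) ≠ 0) (hε : ∀ a, sliceL ε (Δ a) = a) (a b : A) :
    ε (a * b) = ε a * ε b := by
  have h := aux_cancel Δ hs
    ((Algebra.linearMap ℂ A) ∘ₗ ε ∘ₗ LinearMap.mul' ℂ A)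
    ((Algebra.linearMap ℂ A) ∘ₗ LinearMap.mul' ℂ ℂ ∘ₗ TensorProduct.map ε ε) ?_ a b
  · have : Nontrivial A := ⟨1, 0, hone⟩
    simp only [LinearMap.comp_apply, LinearMap.mul'_apply, TensorProduct.map_tmul,
      Algebra.linearMap_apply] at h
    exact (algebraMap ℂ A).injective h
  · intro a b
    have e1 := aux_ind2 (auxQ ((Algebra.linearMap ℂ A) ∘ₗ ε ∘ₗ LinearMap.mul' ℂ A))
      (sliceL ε ∘ₗ LinearMap.mul' ℂ (A ⊗[ℂ] A))
      (by intros; simp [Algebra.smul_def]) (Δ a) (Δ b)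
    have e2 := aux_ind2 (auxQ ((Algebra.linearMap ℂ A) ∘ₗ LinearMap.mul' ℂ ℂ ∘ₗ
        TensorProduct.map ε ε))
      (LinearMap.mul' ℂ A ∘ₗ TensorProduct.map (sliceL ε) (sliceL ε))
      (by
        intros
        simp only [auxQ_tmul, LinearMap.comp_apply, LinearMap.mul'_apply, TensorProduct.map_tmul,
          Algebra.linearMap_apply, aux_sliceL_tmul]
        rw [← Algebra.smul_def, smul_mul_smul_comm]) (Δ a) (Δ b)
    rw [e1, e2]
    simp [hε, ← map_mul]

/-- The antipode is anti-multiplicative. -/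
theorem aux_antipode_mul (Δ : A →ₐ[ℂ] A ⊗[ℂ] A) (hs : Function.Surjective (T1 Δ))
    (ε : A →ₗ[ℂ] ℂ) (hε : ∀ a b, ε (a * b) = ε a * ε b) (S : A →ₗ[ℂ] A)
    (hS : ∀ a, LinearMap.mul' ℂ A (TensorProduct.map S LinearMap.id (Δ a)) = ε a • (1 : A))
    (a b : A) : S (a * b) = S b * S a := by
  have h := aux_cancel Δ hs (S ∘ₗ LinearMap.mul' ℂ A)
    (LinearMap.mul' ℂ A ∘ₗ TensorProduct.map S S ∘ₗ (TensorProduct.comm ℂ A A).toLinearMap) ?_ a b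
  · simpa using h
  · intro a b
    have e1 := aux_ind2 (auxQ (S ∘ₗ LinearMap.mul' ℂ A))
      (LinearMap.mul' ℂ A ∘ₗ TensorProduct.map S LinearMap.id ∘ₗ LinearMap.mul' ℂ (A ⊗[ℂ] A))
      (by intros; simp) (Δ a) (Δ b)
    have e2 : ∀ (u v : A ⊗[ℂ] A) (r : ℂ),
        LinearMap.mul' ℂ A (TensorProduct.map S LinearMap.id u) = r • (1 : A) →
        auxQ (LinearMap.mul' ℂ A ∘ₗ TensorProduct.map S S ∘ₗ
          (TensorProduct.comm ℂ A A).toLinearMap) (u ⊗ₜ[ℂ] v) =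
        r • LinearMap.mul' ℂ A (TensorProduct.map S LinearMap.id v) := by
      intro u v r hu
      induction v with
      | zero => simp
      | add v v' hv hv' => simp only [TensorProduct.tmul_add, map_add, hv, hv', smul_add]
      | tmul y y' =>
        have e3 : auxQ (LinearMap.mul' ℂ A ∘ₗ TensorProduct.map S S ∘ₗ
            (TensorProduct.comm ℂ A A).toLinearMap) (u ⊗ₜ[ℂ] (y ⊗ₜ[ℂ] y')) =
            S y * LinearMap.mul' ℂ A (TensorProduct.map S LinearMap.id u) * y' := by
          clear hu
          induction u with
          | zero => simp
          | add v v' hv hv' =>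
            simp only [TensorProduct.add_tmul, map_add, hv, hv', mul_add, add_mul]
          | tmul x x' => simp [mul_assoc]
        rw [e3, hu]
        simp
    rw [e1, e2 _ _ _ (hS a), hS b]
    simp only [LinearMap.comp_apply, LinearMap.mul'_apply, ← map_mul, hS, hε, smul_smul]

/-- There is a unique linear map `S : A → A` with
`S((id ⊗ φ)(Δ(a)(1 ⊗ b))) = (id ⊗ φ)((1 ⊗ a)Δ(b))`, and it is anti-multiplicative. -/
theorem antipode_exists_unique_antihomomorphism
    (Δ : A →ₐ[ℂ] A ⊗[ℂ] A) (hΔ : IsCoassoc Δ) (hfull : IsFull Δ)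
    (φ : A →ₗ[ℂ] ℂ) (hφ : IsLeftIntegral Δ φ) (hφf : IsFaithful φ)
    (ψ : A →ₗ[ℂ] ℂ) (hψ : IsRightIntegral Δ ψ) (hψf : IsFaithful ψ) :
    ∃ S : A →ₗ[ℂ] A,
      (∀ a b : A, S (sliceR φ (Δ a * ((1 : A) ⊗ₜ[ℂ] b))) =
        sliceR φ (((1 : A) ⊗ₜ[ℂ] a) * Δ b)) ∧
      (∀ S' : A →ₗ[ℂ] A,
        (∀ a b : A, S' (sliceR φ (Δ a * ((1 : A) ⊗ₜ[ℂ] b))) =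
          sliceR φ (((1 : A) ⊗ₜ[ℂ] a) * Δ b)) → S' = S) ∧
      (∀ a b : A, S (a * b) = S b * S a) := by
  have hspan := aux_span Δ hfull φ hφf
  have hs := aux_T1_surj Δ hΔ hfull φ hφ hφf
  have hi := aux_T1_inj Δ ψ hψ hψf
  let T : A ⊗[ℂ] A ≃ₗ[ℂ] A ⊗[ℂ] A := LinearEquiv.ofBijective (T1 Δ) ⟨hi, hs⟩
  have hT : ∀ z, T.symm (T1 Δ z) = z := fun z => T.symm_apply_apply z
  have hTW : ∀ a b, T.symm (sliceR φ (Δ a * ((1 : A) ⊗ₜ[ℂ] b)) ⊗ₜ[ℂ] (1 : A)) =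
      auxW φ (Δ a ⊗ₜ[ℂ] Δ b) := by
    intro a b
    rw [← aux_T1_W Δ hΔ φ hφ, hT]
  have hTm : ∀ c d : A, T.symm (c ⊗ₜ[ℂ] d) =
      T.symm (c ⊗ₜ[ℂ] (1 : A)) * ((1 : A) ⊗ₜ[ℂ] d) := by
    intro c d
    obtain ⟨w, hw⟩ := hs (c ⊗ₜ[ℂ] (1 : A))
    have h2 : c ⊗ₜ[ℂ] d = T1 Δ (w * ((1 : A) ⊗ₜ[ℂ] d)) := by rw [aux_T1_mul, hw]; simp
    rw [h2, hT, ← hw, hT]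
  -- a normalised functional
  obtain ⟨p, hp⟩ : ∃ p, φ p ≠ 0 := by
    by_contra hcon
    push Not at hcon
    exact hφ.1 (LinearMap.ext hcon)
  have hone : (1 : A) ≠ 0 := by
    intro h
    apply hp
    rw [← mul_one p, h]
    simp
  let f : A →ₗ[ℂ] ℂ := (φ p)⁻¹ • (φ ∘ₗ LinearMap.mulLeft ℂ p)
  have hf1 : f 1 = 1 := by simp [f, hp]
  let j : A →ₗ[ℂ] A ⊗[ℂ] A := T.symm.toLinearMap ∘ₗ (TensorProduct.mk ℂ A A).flip 1
  have hj : ∀ c, j c = T.symm (c ⊗ₜ[ℂ] (1 : A)) := fun c => rfl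
  let ε : A →ₗ[ℂ] ℂ := f ∘ₗ LinearMap.mul' ℂ A ∘ₗ j
  have hext : ∀ F G : A →ₗ[ℂ] A, (∀ a b, F (sliceR φ (Δ a * ((1 : A) ⊗ₜ[ℂ] b))) =
      G (sliceR φ (Δ a * ((1 : A) ⊗ₜ[ℂ] b)))) → F = G := by
    intro F G h
    apply LinearMap.ext_on hspan
    rintro y ⟨a, b, rfl⟩
    exact h a b
  have hE : LinearMap.mul' ℂ A ∘ₗ j = LinearMap.toSpanSingleton ℂ A 1 ∘ₗ ε := by
    apply hext
    intro a b
    have h1 : LinearMap.mul' ℂ A (j (sliceR φ (Δ a * ((1 : A) ⊗ₜ[ℂ] b)))) =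
        φ (a * b) • (1 : A) := by
      rw [hj, hTW, aux_mul_W, ← map_mul, hφ.2]
    simp only [LinearMap.comp_apply, ε, h1, map_smul, hf1, LinearMap.toSpanSingleton_apply,
      smul_eq_mul, mul_one]
  have hE' : ∀ c, LinearMap.mul' ℂ A (T.symm (c ⊗ₜ[ℂ] (1 : A))) = ε c • (1 : A) := by
    intro c
    exact LinearMap.congr_fun hE c
  have hmT : ∀ w, LinearMap.mul' ℂ A (T.symm w) = sliceL ε w := by
    intro w
    induction w with
    | zero => simp
    | add u v hu hv => simp only [map_add, hu, hv]
    | tmul c d => rw [hTm, aux_mul_mul, hE']; simp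
  have hT1one : ∀ a, T1 Δ (a ⊗ₜ[ℂ] (1 : A)) = Δ a := by
    intro a
    rw [aux_T1_tmul, ← Algebra.TensorProduct.one_def, mul_one]
  have hcounit : ∀ a, sliceL ε (Δ a) = a := by
    intro a
    rw [← hmT, ← hT1one, hT]
    simp
  let S : A →ₗ[ℂ] A := sliceL ε ∘ₗ j
  have hSj : ∀ c, S c = sliceL ε (T.symm (c ⊗ₜ[ℂ] (1 : A))) := fun c => rfl
  have hSd : ∀ a b : A, S (sliceR φ (Δ a * ((1 : A) ⊗ₜ[ℂ] b))) =
        sliceR φ (((1 : A) ⊗ₜ[ℂ] a) * Δ b) := by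
    intro a b
    rw [hSj, hTW, aux_sliceL_W, hcounit]
  refine ⟨S, hSd, ?_, ?_⟩
  · intro S' hS'
    apply hext
    intro a b
    rw [hS', hSd]
  · apply aux_antipode_mul Δ hs ε (aux_counit_mul Δ hs ε hone hcounit)
    have h1 : ∀ w, LinearMap.mul' ℂ A (TensorProduct.map S LinearMap.id w) =
        sliceL ε (T.symm w) := by
      intro w
      induction w with
      | zero => simp
      | add u v hu hv => simp only [map_add, hu, hv]
      | tmul c d => rw [hTm, aux_sliceL_mul, ← hSj]; simp
    intro a
    rw [h1, ← hT1one, hT]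
    simp
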